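/- If a Kenmotsu manifold of dimension 2n+1 admits a *-Ricci soliton with potential vector field V, then the Lie derivative of the Ricci tensor satisfies (£_V S)(X, ξ) = -X(r) + ξ(r)η(X) for all vector fields X, where r is the scalar curvature. -/

import Mathlib

/-- An abstract algebraic model of a `(2n+1)`-dimensional Kenmotsu manifold:
`C` plays the role of the ring of smooth functions on the manifold and vector
fields are modelled as `ℝ`-derivations of `C`.  A global orthonormal frame `e`
is included in order to express traces (Ricci tensor, scalar curvature). -/
structure KenmotsuManifold (n : ℕ) (C : Type*) [CommRing C] [Algebra ℝ C] where
  /-- the Riemannian metric -/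
  g : Derivation ℝ C C → Derivation ℝ C C → C
  /-- the structure `(1,1)`-tensor field -/
  φ : Derivation ℝ C C → Derivation ℝ C C
  /-- the Reeb (characteristic) vector field -/
  ξ : Derivation ℝ C C
  /-- the contact `1`-form -/
  η : Derivation ℝ C C → C
  /-- the Levi-Civita connection -/
  nabla : Derivation ℝ C C → Derivation ℝ C C → Derivation ℝ C C
  /-- a global orthonormal frame, used to take traces -/
  e : Fin (2 * n + 1) → Derivation ℝ C C
  g_symm : ∀ X Y, g X Y = g Y X
  g_add_left : ∀ X Y Z, g (X + Y) Z = g X Z + g Y Z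
  g_smul_left : ∀ (f : C) (X Y), g (f • X) Y = f * g X Y
  g_nondeg : ∀ X, (∀ Y, g X Y = 0) → X = 0
  g_frame : ∀ i j, g (e i) (e j) = if i = j then 1 else 0
  frame_span : ∀ X : Derivation ℝ C C, X = ∑ i, g X (e i) • e i
  phi_phi : ∀ X, φ (φ X) = -X + η X • ξ
  phi_linear : ∀ (f : C) (X Y), φ (f • X + Y) = f • φ X + φ Y
  eta_xi : η ξ = 1
  eta_def : ∀ X, η X = g X ξ
  compat_phi : ∀ X Y, g (φ X) (φ Y) = g X Y - η X * η Y
  nabla_add_left : ∀ X Y Z, nabla (X + Y) Z = nabla X Z + nabla Y Z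
  nabla_smul_left : ∀ (f : C) (X Y), nabla (f • X) Y = f • nabla X Y
  nabla_add_right : ∀ X Y Z, nabla X (Y + Z) = nabla X Y + nabla X Z
  nabla_leibniz : ∀ (X) (f : C) (Y), nabla X (f • Y) = X f • Y + f • nabla X Y
  torsion_free : ∀ X Y, nabla X Y - nabla Y X = ⁅X, Y⁆
  metric_compat : ∀ X Y Z, X (g Y Z) = g (nabla X Y) Z + g Y (nabla X Z)
  /-- the Kenmotsu condition `(∇_X φ)Y = g(φX,Y)ξ - η(Y)φX` -/
  kenmotsu : ∀ X Y, nabla X (φ Y) - φ (nabla X Y) = g (φ X) Y • ξ - η Y • φ X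

namespace KenmotsuManifold

variable {n : ℕ} {C : Type*} [CommRing C] [Algebra ℝ C] (K : KenmotsuManifold n C)

/-- the Riemann curvature tensor `R(X,Y)Z = ∇_X∇_Y Z - ∇_Y∇_X Z - ∇_{[X,Y]}Z` -/
def Rm (X Y Z : Derivation ℝ C C) : Derivation ℝ C C :=
  K.nabla X (K.nabla Y Z) - K.nabla Y (K.nabla X Z) - K.nabla ⁅X, Y⁆ Z

/-- the Ricci tensor `S(X,Y) = trace (Z ↦ R(Z,X)Y)` -/
def S (X Y : Derivation ℝ C C) : C := ∑ i, K.g (K.Rm (K.e i) X Y) (K.e i)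

/-- the Ricci operator `Q`, `g(QX,Y) = S(X,Y)` -/
def Q (X : Derivation ℝ C C) : Derivation ℝ C C := ∑ i, K.S X (K.e i) • K.e i

/-- the scalar curvature `r` -/
def r : C := ∑ i, K.S (K.e i) (K.e i)

/-- the `*`-Ricci tensor `S*(X,Y) = (1/2) trace (Z ↦ R(X,φY)φZ)` -/
noncomputable def Sstar (X Y : Derivation ℝ C C) : C :=
  (2 : ℝ)⁻¹ • ∑ i, K.g (K.Rm X (K.φ Y) (K.φ (K.e i))) (K.e i)

/-- the covariant derivative `(∇_X Q)Y` of the Ricci operator -/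
def nablaQ (X Y : Derivation ℝ C C) : Derivation ℝ C C :=
  K.nabla X (K.Q Y) - K.Q (K.nabla X Y)

/-- the Lie derivative `(£_V g)(X,Y)` of the metric -/
def lieG (V X Y : Derivation ℝ C C) : C :=
  V (K.g X Y) - K.g ⁅V, X⁆ Y - K.g X ⁅V, Y⁆

/-- the Lie derivative `(£_V S)(X,Y)` of the Ricci tensor -/
def lieS (V X Y : Derivation ℝ C C) : C :=
  V (K.S X Y) - K.S ⁅V, X⁆ Y - K.S X ⁅V, Y⁆

/-- `g` is a `*`-Ricci soliton with potential vector field `V` and soliton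
constant `l`: `£_V g + 2S* + 2l g = 0`. -/
def IsStarRicciSoliton (V : Derivation ℝ C C) (l : ℝ) : Prop :=
  ∀ X Y, K.lieG V X Y + 2 * K.Sstar X Y + (2 * l) • K.g X Y = 0

/-- `g` is a gradient almost `*`-Ricci soliton with potential function `f`
(with gradient `F`, i.e. `g(F,X) = Xf`) and soliton function `l`:
`Hess f + S* + l g = 0`. -/
def IsGradAlmostStarRicciSoliton (f : C) (F : Derivation ℝ C C) (l : C) : Prop :=
  (∀ X, K.g F X = X f) ∧ ∀ X Y, K.g (K.nabla X F) Y + K.Sstar X Y + l * K.g X Y = 0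

/-- `M` is `η`-Einstein: `S = α g + β η⊗η`. -/
def IsEtaEinstein : Prop :=
  ∃ α β : C, ∀ X Y, K.S X Y = α * K.g X Y + β * (K.η X * K.η Y)

end KenmotsuManifold

/-!
Polarising the covariant derivative of `£_V g` expresses `£_V ∇` through `∇(£_V g)`. For a
`*`-Ricci soliton, `£_V g` is a combination of `S`, `g` and `η ⊗ η`, and the identities
`(∇_X S)(ξ, Y) = -2n g(X, Y) - S(X, Y)` and `∇_ξ S = -2S - 4n g` give
`(£_V ∇)(X, ξ) = 2QX + 4nX`. Yano's commutation formula
`(£_V R)(X, Y)ξ = (∇_X £_V ∇)(Y, ξ) - (∇_Y £_V ∇)(X, ξ)` then determines `(£_V R)(X, Y)ξ`, and its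
trace over `X` is `(£_V S)(Y, ξ)`; the derivatives of `Q` are traced by `div Q = dr / 2`, and
`ξ r = -2(r + 2n(2n + 1))` accounts for the rest.

The usual axiom `φξ = 0` has to be derived: `φξ = f ξ` with `f ^ 2 = 0`, but `C` may have
nilpotents. Differentiating `g(φX, Y) + g(X, φY) = 2f η(X) η(Y)` gives `f • ∇ξ = 0`, hence
`f g = f η ⊗ η`, whose trace is `2n f = 0`. In dimension one the Ricci tensor vanishes.
-/

open Module LinearMap

namespace KenmotsuManifold

section Algebra

variable {R A M ι : Type*} [CommRing R] [CommRing A] [Algebra R A] [AddCommGroup M] [Module A M]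

/- In coordinates `D ∘ T` and `T ∘ D` contribute the same double sum of products of entries, so only
the terms where `E` differentiates the diagonal entries of `T` survive. -/
lemma sum_repr_commutator_eq_derivation_trace [Fintype ι] (b : Basis ι A M)
    (E : Derivation R A A) (D : M →+ M)
    (hD : ∀ (f : A) (m : M), D (f • m) = E f • m + f • D m) (T : M →ₗ[A] M) :
    ∑ i, b.repr (D (T (b i)) - T (D (b i))) i = E (trace A M T) := by
  classical
  have hDT (i : ι) : b.repr (D (T (b i))) i =
      E (b.repr (T (b i)) i) + ∑ j, b.repr (T (b i)) j * b.repr (D (b j)) i := by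
    conv_lhs => rw [← b.sum_repr (T (b i))]
    simp [-Basis.sum_repr, hD, Finset.sum_add_distrib, Finsupp.single_apply]
  have hTD (i : ι) : b.repr (T (D (b i))) i = ∑ j, b.repr (D (b i)) j * b.repr (T (b j)) i := by
    conv_lhs => rw [← b.sum_repr (D (b i))]
    simp [-Basis.sum_repr]
  have hcomm : ∑ i, ∑ j, b.repr (T (b i)) j * b.repr (D (b j)) i =
      ∑ i, ∑ j, b.repr (D (b i)) j * b.repr (T (b j)) i := by
    rw [Finset.sum_comm]
    simp only [mul_comm]
  simp only [map_sub, Finsupp.sub_apply, hDT, hTD, Finset.sum_sub_distrib, Finset.sum_add_distrib,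
    hcomm, add_sub_cancel_right, trace_eq_matrix_trace A b, Matrix.trace, Matrix.diag,
    toMatrix_apply, map_sum]

lemma natCast_mul_left_cancel [Algebra ℝ A] {k : ℕ} (hk : k ≠ 0) {a b : A}
    (h : (k : A) * a = k * b) : a = b := by
  have : IsAddTorsionFree A := .of_isTorsionFree ℝ A
  exact nsmul_right_injective hk (by simpa using h)

lemma two_mul_left_cancel [Algebra ℝ A] {a b : A} (h : 2 * a = 2 * b) : a = b :=
  natCast_mul_left_cancel two_ne_zero (by simpa using h)

lemma derivation_two_mul (X : Derivation R A A) (f : A) : X (2 * f) = 2 * X f := by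
  simp [two_mul]

end Algebra

variable {n : ℕ} {C : Type*} [CommRing C] [Algebra ℝ C] (K : KenmotsuManifold n C)
  (V E X Y Z W : Derivation ℝ C C)

section Metric

lemma g_add_right : K.g X (Y + Z) = K.g X Y + K.g X Z := by
  simp only [K.g_symm X, K.g_add_left]

lemma g_smul_right (f : C) : K.g X (f • Y) = f * K.g X Y := by
  simp only [K.g_symm X, K.g_smul_left]

/-- The metric as a `C`-bilinear form, giving access to the library of bilinear maps. -/
def metric : LinearMap.BilinForm C (Derivation ℝ C C) :=
  LinearMap.mk₂ C K.g K.g_add_left K.g_smul_left K.g_add_right fun f X Y => K.g_smul_right X Y f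

lemma g_zero_left : K.g 0 X = 0 := map_zero₂ K.metric X

lemma g_neg_left : K.g (-X) Y = -K.g X Y := map_neg₂ K.metric X Y

lemma g_neg_right : K.g X (-Y) = -K.g X Y := map_neg (K.metric X) Y

lemma g_sub_left : K.g (X - Y) Z = K.g X Z - K.g Y Z := map_sub₂ K.metric X Y Z

lemma g_sub_right : K.g X (Y - Z) = K.g X Y - K.g X Z := map_sub (K.metric X) Y Z

variable {X Y} in
lemma ext_of_g (h : ∀ Z, K.g X Z = K.g Y Z) : X = Y :=
  sub_eq_zero.mp <| K.g_nondeg _ fun Z => by rw [g_sub_left, h, sub_self]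

/-- The orthonormal frame as a basis of the module of vector fields. -/
noncomputable def frameBasis : Basis (Fin (2 * n + 1)) C (Derivation ℝ C C) :=
  .ofEquivFun
    { toFun := fun X i => K.g X (K.e i)
      map_add' := fun X Y => funext fun i => K.g_add_left X Y (K.e i)
      map_smul' := fun f X => funext fun i => K.g_smul_left f X (K.e i)
      invFun := fun c => ∑ i, c i • K.e i
      left_inv := fun X => (K.frame_span X).symm
      right_inv := fun c => funext fun j => by
        change K.metric (∑ i, c i • K.e i) (K.e j) = c j
        simp [metric, K.g_frame] }

lemma frameBasis_repr (i : Fin (2 * n + 1)) : K.frameBasis.repr X i = K.g X (K.e i) := rfl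

lemma frameBasis_apply (i : Fin (2 * n + 1)) : K.frameBasis i = K.e i :=
  K.frameBasis.repr.injective <| Finsupp.ext fun j => by
    simp [frameBasis_repr, K.g_frame, Finsupp.single_apply]

lemma trace_eq_sum_g (T : Derivation ℝ C C →ₗ[C] Derivation ℝ C C) :
    trace C _ T = ∑ i, K.g (T (K.e i)) (K.e i) := by
  simp [trace_eq_matrix_trace C K.frameBasis, Matrix.trace, toMatrix_apply, frameBasis_repr,
    frameBasis_apply]

lemma sum_g_comp_comm (S T : Derivation ℝ C C →ₗ[C] Derivation ℝ C C) :
    ∑ i, K.g (S (T (K.e i))) (K.e i) = ∑ i, K.g (T (S (K.e i))) (K.e i) := by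
  simpa only [K.trace_eq_sum_g, Module.End.mul_apply] using trace_mul_comm C S T

lemma sum_g_mul_apply_frame (F : Derivation ℝ C C →ₗ[C] C) :
    ∑ i, K.g X (K.e i) * F (K.e i) = F X := by
  conv_rhs => rw [K.frame_span X]
  simp

lemma sum_g_mul_g_frame : ∑ i, K.g X (K.e i) * K.g Y (K.e i) = K.g Y X :=
  K.sum_g_mul_apply_frame X (K.metric Y)

lemma sum_g_frame_self : ∑ i, K.g (K.e i) (K.e i) = 2 * (n : C) + 1 := by
  simp [K.g_frame]

lemma sum_g_commutator_eq_derivation_trace (D : Derivation ℝ C C →+ Derivation ℝ C C)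
    (hD : ∀ (f : C) (X : Derivation ℝ C C), D (f • X) = E f • X + f • D X)
    (T : Derivation ℝ C C →ₗ[C] Derivation ℝ C C) :
    ∑ i, K.g (D (T (K.e i)) - T (D (K.e i))) (K.e i) = E (∑ i, K.g (T (K.e i)) (K.e i)) := by
  simpa only [frameBasis_repr, frameBasis_apply, K.trace_eq_sum_g] using
    sum_repr_commutator_eq_derivation_trace K.frameBasis E D hD T

end Metric

section Connection

/-- The covariant derivative along `X` as an additive endomorphism. -/
def nablaHom : Derivation ℝ C C →+ Derivation ℝ C C :=
  .mk' (K.nabla X) (K.nabla_add_right X)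

lemma nabla_zero_right : K.nabla X 0 = 0 := map_zero (K.nablaHom X)

lemma nabla_sub_right : K.nabla X (Y - Z) = K.nabla X Y - K.nabla X Z := map_sub (K.nablaHom X) Y Z

/-- The covariant derivative of a vector field `Y`, as the endomorphism `X ↦ ∇_X Y`. -/
def nablaEnd : End C (Derivation ℝ C C) where
  toFun X := K.nabla X Y
  map_add' X Z := K.nabla_add_left X Z Y
  map_smul' f X := K.nabla_smul_left f X Y

lemma nabla_zero_left : K.nabla 0 Y = 0 := map_zero (K.nablaEnd Y)

lemma nabla_neg_left : K.nabla (-X) Y = -K.nabla X Y := map_neg (K.nablaEnd Y) X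

lemma nabla_sub_left : K.nabla (X - Y) Z = K.nabla X Z - K.nabla Y Z := map_sub (K.nablaEnd Z) X Y

lemma lie_eq_nabla_sub : ⁅X, Y⁆ = K.nabla X Y - K.nabla Y X := (K.torsion_free X Y).symm

end Connection

section Curvature

lemma Rm_swap : K.Rm X Y Z = -K.Rm Y X Z := by
  rw [Rm, Rm, ← lie_skew X Y, nabla_neg_left]
  abel

lemma Rm_add_left : K.Rm (X + Y) Z W = K.Rm X Z W + K.Rm Y Z W := by
  simp only [Rm, add_lie, K.nabla_add_left, K.nabla_add_right]
  abel

lemma Rm_smul_left (f : C) : K.Rm (f • X) Y Z = f • K.Rm X Y Z := by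
  have hlie : ⁅f • X, Y⁆ = f • ⁅X, Y⁆ - Y f • X := by
    rw [← lie_skew, LieRinehartRing.leibniz_smul_right, ← lie_skew X Y, Derivation.bracket_eq_fun]
    module
  simp only [Rm, hlie, K.nabla_smul_left, K.nabla_leibniz, nabla_sub_left]
  module

lemma Rm_add_right : K.Rm X Y (Z + W) = K.Rm X Y Z + K.Rm X Y W := by
  simp only [Rm, K.nabla_add_right]
  abel

lemma Rm_smul_right (f : C) : K.Rm X Y (f • Z) = f • K.Rm X Y Z := by
  simp only [Rm, K.nabla_add_right, K.nabla_leibniz, Derivation.commutator_apply]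
  module

/-- The Riemann curvature tensor as a trilinear map. -/
def curvature : Derivation ℝ C C →ₗ[C] Derivation ℝ C C →ₗ[C] End C (Derivation ℝ C C) :=
  LinearMap.mk₂ C
    (fun X Y =>
      { toFun := K.Rm X Y
        map_add' := K.Rm_add_right X Y
        map_smul' := fun f Z => K.Rm_smul_right X Y Z f })
    (fun X Y Z => LinearMap.ext fun W => K.Rm_add_left X Y Z W)
    (fun f X Y => LinearMap.ext fun Z => K.Rm_smul_left X Y Z f)
    (fun X Y Z => LinearMap.ext fun W => by
      simp [K.Rm_swap X, Rm_add_left, add_comm])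
    (fun f X Y => LinearMap.ext fun Z => by
      simp [K.Rm_swap X, Rm_smul_left])

lemma Rm_sub_left : K.Rm (X - Y) Z W = K.Rm X Z W - K.Rm Y Z W :=
  map_sub ((K.curvature.flip Z).flip W) X Y

lemma Rm_sub_middle : K.Rm X (Y - Z) W = K.Rm X Y W - K.Rm X Z W :=
  map_sub ((K.curvature X).flip W) Y Z

lemma Rm_smul_middle (f : C) : K.Rm X (f • Y) Z = f • K.Rm X Y Z :=
  map_smul ((K.curvature X).flip Z) f Y

lemma first_bianchi : K.Rm X Y Z + K.Rm Y Z X + K.Rm Z X Y = 0 := by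
  have hjac : ⁅X, ⁅Y, Z⁆⁆ + ⁅Y, ⁅Z, X⁆⁆ + ⁅Z, ⁅X, Y⁆⁆ = 0 := lie_jacobi X Y Z
  simp only [Rm]
  simp only [K.lie_eq_nabla_sub, nabla_sub_left, nabla_sub_right] at hjac ⊢
  rw [← hjac]
  abel

lemma g_Rm_skew : K.g (K.Rm X Y Z) W = -K.g Z (K.Rm X Y W) := by
  have hess (X Y : Derivation ℝ C C) : X (Y (K.g Z W)) =
      K.g (K.nabla X (K.nabla Y Z)) W + K.g (K.nabla Y Z) (K.nabla X W) +
        (K.g (K.nabla X Z) (K.nabla Y W) + K.g Z (K.nabla X (K.nabla Y W))) := by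
    rw [K.metric_compat Y, map_add, K.metric_compat X, K.metric_compat X]
  have hlie := K.metric_compat ⁅X, Y⁆ Z W
  rw [Derivation.commutator_apply, hess X Y, hess Y X] at hlie
  simp only [Rm, g_sub_left, g_sub_right]
  linear_combination hlie

lemma g_Rm_pair_symm : K.g (K.Rm X Y Z) W = K.g (K.Rm Z W X) Y := by
  have bianchi (X Y Z W) : K.g (K.Rm X Y Z) W + K.g (K.Rm Y Z X) W + K.g (K.Rm Z X Y) W = 0 := by
    rw [← K.g_add_left, ← K.g_add_left, first_bianchi, g_zero_left]
  have skew (X Y Z W) : K.g (K.Rm X Y Z) W = -K.g (K.Rm X Y W) Z := by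
    rw [g_Rm_skew, K.g_symm Z]
  have swap (X Y Z W) : K.g (K.Rm X Y Z) W = -K.g (K.Rm Y X Z) W := by
    rw [Rm_swap, g_neg_left]
  -- Milnor's octahedron: the four Bianchi identities are the faces, combined with signs.
  apply two_mul_left_cancel
  linear_combination bianchi X Y Z W + bianchi Y Z W X - bianchi Z W X Y - bianchi W X Y Z
    - skew Y Z W X - skew Z W Y X - swap W Y Z X + swap W X Z Y - skew X W Z Y + swap X Z W Y
    - skew Z X W Y + swap W X Y Z + skew X Y W Z + skew Y W X Z

end Curvature

section Ricci

lemma S_symm : K.S X Y = K.S Y X :=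
  Finset.sum_congr rfl fun i _ => by
    rw [g_Rm_pair_symm, Rm_swap, g_neg_left, g_Rm_skew, neg_neg, K.g_symm]

/-- The Ricci tensor as a symmetric bilinear form. -/
def ricci : LinearMap.BilinForm C (Derivation ℝ C C) :=
  LinearMap.mk₂ C K.S
    (fun X Y Z => by
      simp [S, ← Finset.sum_add_distrib, ← g_add_left, Rm_swap K (K.e _), Rm_add_left, add_comm])
    (fun f X Y => by
      simp [S, Finset.mul_sum, ← g_smul_left, Rm_swap K (K.e _), Rm_smul_left])
    (fun X Y Z => by simp only [S, Rm_add_right, K.g_add_left, Finset.sum_add_distrib])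
    (fun f X Y => by simp only [S, Rm_smul_right, K.g_smul_left, Finset.mul_sum, smul_eq_mul])

lemma S_smul_left (f : C) : K.S (f • X) Y = f * K.S X Y := map_smul₂ K.ricci f X Y

lemma S_sub_left : K.S (X - Y) Z = K.S X Z - K.S Y Z := map_sub₂ K.ricci X Y Z

lemma g_Q : K.g (K.Q X) Y = K.S X Y := by
  calc K.g (K.Q X) Y = ∑ i, K.S X (K.e i) * K.g (K.e i) Y := by
        change K.metric (∑ i, K.S X (K.e i) • K.e i) Y = _
        simp only [map_sum, map_smul, LinearMap.sum_apply, LinearMap.smul_apply, smul_eq_mul]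
        rfl
    _ = ∑ i, K.g Y (K.e i) * K.ricci X (K.e i) :=
        Finset.sum_congr rfl fun i _ => by rw [mul_comm, K.g_symm Y]; rfl
    _ = K.S X Y := K.sum_g_mul_apply_frame Y (K.ricci X)

/-- The Ricci operator as an endomorphism of the module of vector fields. -/
def ricciOperator : End C (Derivation ℝ C C) where
  toFun := K.Q
  map_add' X Y := K.ext_of_g fun Z => by
    rw [K.g_add_left, g_Q, g_Q, g_Q]; exact map_add₂ K.ricci X Y Z
  map_smul' f X := K.ext_of_g fun Z => by
    rw [RingHom.id_apply, K.g_smul_left, g_Q, g_Q]; exact map_smul₂ K.ricci f X Z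

lemma r_eq_sum_g_Q : K.r = ∑ i, K.g (K.Q (K.e i)) (K.e i) := by
  simp only [r, g_Q]

lemma S_eq_zero_of_dim_one (K : KenmotsuManifold 0 C) : K.S X Y = 0 := by
  refine Finset.sum_eq_zero fun i _ => ?_
  have hspan : X = K.g X (K.e i) • K.e i := by
    have : Subsingleton (Fin (2 * 0 + 1)) := Fin.subsingleton_one
    rw [← Fintype.sum_subsingleton (fun j => K.g X (K.e j) • K.e j) i]
    exact K.frame_span X
  have hself : K.Rm (K.e i) (K.e i) Y = 0 := by
    refine K.ext_of_g fun Z => two_mul_left_cancel ?_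
    have h := congrArg (K.g · Z) (K.Rm_swap (K.e i) (K.e i) Y)
    simp only [g_neg_left] at h
    rw [g_zero_left]
    linear_combination h
  rw [hspan, Rm_smul_middle, hself, smul_zero, g_zero_left]

end Ricci

section CovariantDerivative

/-- The covariant derivative `(∇_X β)(Y, Z)` of a field `β` of bilinear forms. -/
def nablaForm (β : Derivation ℝ C C → Derivation ℝ C C → C) (X Y Z : Derivation ℝ C C) : C :=
  X (β Y Z) - β (K.nabla X Y) Z - β Y (K.nabla X Z)

/-- The covariant derivative `(∇_E R)(X, Y)Z` of the curvature tensor. -/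
def nablaRm (E X Y Z : Derivation ℝ C C) : Derivation ℝ C C :=
  K.nabla E (K.Rm X Y Z) - K.Rm (K.nabla E X) Y Z - K.Rm X (K.nabla E Y) Z -
    K.Rm X Y (K.nabla E Z)

/-- The Lie derivative `(£_V R)(X, Y)Z` of the curvature tensor. -/
def lieRm (V X Y Z : Derivation ℝ C C) : Derivation ℝ C C :=
  ⁅V, K.Rm X Y Z⁆ - K.Rm ⁅V, X⁆ Y Z - K.Rm X ⁅V, Y⁆ Z - K.Rm X Y ⁅V, Z⁆

lemma g_nablaQ : K.g (K.nablaQ X Y) Z = K.nablaForm K.S X Y Z := by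
  have h := K.metric_compat X (K.Q Y) Z
  rw [g_Q, g_Q] at h
  rw [nablaQ, nablaForm, g_sub_left, g_Q, h]
  ring

lemma nablaForm_S_symm : K.nablaForm K.S X Y Z = K.nablaForm K.S X Z Y := by
  simp only [nablaForm, K.S_symm Y, K.S_symm (K.nabla X Y)]
  ring

lemma sum_g_nablaQ_frame : ∑ i, K.g (K.nablaQ E (K.e i)) (K.e i) = E K.r := by
  rw [r_eq_sum_g_Q]
  exact K.sum_g_commutator_eq_derivation_trace E (K.nablaHom E) (K.nabla_leibniz E) K.ricciOperator

lemma sum_g_derivation_Rm_frame (D : Derivation ℝ C C →+ Derivation ℝ C C)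
    (hD : ∀ (f : C) (X : Derivation ℝ C C), D (f • X) = E f • X + f • D X) :
    ∑ i, K.g (D (K.Rm (K.e i) Y Z) - K.Rm (D (K.e i)) Y Z - K.Rm (K.e i) (D Y) Z -
      K.Rm (K.e i) Y (D Z)) (K.e i) = E (K.S Y Z) - K.S (D Y) Z - K.S Y (D Z) := by
  simp only [g_sub_left, Finset.sum_sub_distrib]
  have h := K.sum_g_commutator_eq_derivation_trace E D hD ((K.curvature.flip Y).flip Z)
  simp only [g_sub_left, Finset.sum_sub_distrib] at h
  exact congrArg (· - K.S (D Y) Z - K.S Y (D Z)) h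

lemma sum_g_nablaRm_frame :
    ∑ i, K.g (K.nablaRm E (K.e i) Y Z) (K.e i) = K.nablaForm K.S E Y Z :=
  K.sum_g_derivation_Rm_frame E Y Z (K.nablaHom E) (K.nabla_leibniz E)

lemma sum_g_lieRm_frame : ∑ i, K.g (K.lieRm V (K.e i) Y Z) (K.e i) = K.lieS V Y Z :=
  K.sum_g_derivation_Rm_frame V Y Z (.mk' (fun X => ⁅V, X⁆) (lie_add V)) fun f X => by
    simp [add_comm]

end CovariantDerivative

section SecondBianchi

lemma nablaRm_swap : K.nablaRm E X Y Z = -K.nablaRm E Y X Z := by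
  have hneg := map_neg (K.nablaHom E) (K.Rm Y X Z)
  change K.nabla E (-K.Rm Y X Z) = -K.nabla E (K.Rm Y X Z) at hneg
  rw [nablaRm, nablaRm, K.Rm_swap X, K.Rm_swap X, K.Rm_swap _ Y, K.Rm_swap X, hneg]
  abel

lemma g_nablaRm_skew : K.g (K.nablaRm E X Y Z) W = -K.g Z (K.nablaRm E X Y W) := by
  have h := congrArg E (K.g_Rm_skew X Y Z W)
  rw [map_neg, K.metric_compat, K.metric_compat] at h
  have hZ := K.g_Rm_skew X Y Z (K.nabla E W)
  have hW := K.g_Rm_skew X Y (K.nabla E Z) W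
  have hX := K.g_Rm_skew (K.nabla E X) Y Z W
  have hY := K.g_Rm_skew X (K.nabla E Y) Z W
  simp only [nablaRm, g_sub_left, g_sub_right]
  linear_combination h - hZ - hW - hX - hY

lemma second_bianchi : K.nablaRm E X Y Z + K.nablaRm X Y E Z + K.nablaRm Y E X Z = 0 := by
  have hRm (A B W : Derivation ℝ C C) :
      K.Rm (K.nabla A B) W Z + K.Rm W (K.nabla B A) Z = K.Rm ⁅A, B⁆ W Z := by
    rw [K.Rm_swap W, ← sub_eq_add_neg, ← Rm_sub_left, K.torsion_free]
  have hjac : K.nabla ⁅⁅E, X⁆, Y⁆ Z + K.nabla ⁅⁅X, Y⁆, E⁆ Z + K.nabla ⁅⁅Y, E⁆, X⁆ Z = 0 := by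
    rw [← K.nabla_add_left, ← K.nabla_add_left, ← lie_skew ⁅E, X⁆ Y, ← lie_skew ⁅X, Y⁆ E,
      ← lie_skew ⁅Y, E⁆ X, ← neg_add, ← neg_add, lie_jacobi, neg_zero, nabla_zero_left]
  calc K.nablaRm E X Y Z + K.nablaRm X Y E Z + K.nablaRm Y E X Z
      = K.nabla E (K.Rm X Y Z) - K.Rm X Y (K.nabla E Z)
        + (K.nabla X (K.Rm Y E Z) - K.Rm Y E (K.nabla X Z))
        + (K.nabla Y (K.Rm E X Z) - K.Rm E X (K.nabla Y Z))
        - K.Rm ⁅E, X⁆ Y Z - K.Rm ⁅X, Y⁆ E Z - K.Rm ⁅Y, E⁆ X Z := by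
        rw [← hRm E, ← hRm X, ← hRm Y]
        simp only [nablaRm]
        abel
    _ = K.nabla ⁅⁅E, X⁆, Y⁆ Z + K.nabla ⁅⁅X, Y⁆, E⁆ Z + K.nabla ⁅⁅Y, E⁆, X⁆ Z := by
        simp only [Rm, nabla_sub_right]
        abel
    _ = 0 := hjac

lemma contracted_second_bianchi :
    ∑ i, K.g (K.nablaRm (K.e i) Y E Z) (K.e i) =
      K.nablaForm K.S Y E Z - K.nablaForm K.S E Y Z := by
  have h (i : Fin (2 * n + 1)) : K.g (K.nablaRm (K.e i) Y E Z) (K.e i) =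
      K.g (K.nablaRm Y (K.e i) E Z) (K.e i) - K.g (K.nablaRm E (K.e i) Y Z) (K.e i) := by
    have hvec := K.second_bianchi E (K.e i) Y Z
    rw [add_right_comm, K.nablaRm_swap Y, ← sub_eq_add_neg] at hvec
    rw [eq_neg_of_add_eq_zero_right hvec, neg_sub, g_sub_left]
  rw [Finset.sum_congr rfl fun i _ => h i, Finset.sum_sub_distrib, sum_g_nablaRm_frame,
    sum_g_nablaRm_frame]

lemma derivation_r_eq_two_mul_div : E K.r = 2 * ∑ i, K.nablaForm K.S (K.e i) E (K.e i) := by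
  have hskew : ∑ j, ∑ i, K.g (K.nablaRm (K.e i) (K.e j) E (K.e j)) (K.e i) =
      -∑ i, K.nablaForm K.S (K.e i) E (K.e i) := by
    simp only [← sum_g_nablaRm_frame]
    rw [Finset.sum_comm, ← Finset.sum_neg_distrib]
    simp only [← Finset.sum_neg_distrib]
    refine Finset.sum_congr rfl fun i _ => Finset.sum_congr rfl fun j _ => ?_
    rw [g_nablaRm_skew, K.g_symm]
  simp only [contracted_second_bianchi, Finset.sum_sub_distrib] at hskew
  rw [← sum_g_nablaQ_frame]
  simp only [g_nablaQ]
  linear_combination -hskew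

end SecondBianchi

section AlmostContact

lemma g_xi_right : K.g X K.ξ = K.η X := (K.eta_def X).symm

lemma g_xi_left : K.g K.ξ X = K.η X := by rw [K.g_symm, g_xi_right]

/-- The contact form as a `C`-linear form. -/
def etaForm : Derivation ℝ C C →ₗ[C] C where
  toFun := K.η
  map_add' X Y := by simp only [K.eta_def, K.g_add_left]
  map_smul' f X := by simp only [K.eta_def, K.g_smul_left, RingHom.id_apply, smul_eq_mul]

lemma eta_add : K.η (X + Y) = K.η X + K.η Y := map_add K.etaForm X Y

lemma eta_sub : K.η (X - Y) = K.η X - K.η Y := map_sub K.etaForm X Y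

lemma eta_smul (f : C) : K.η (f • X) = f * K.η X := map_smul K.etaForm f X

/-- The structure tensor `φ` as an endomorphism of the module of vector fields. -/
def phiEnd : End C (Derivation ℝ C C) where
  toFun := K.φ
  map_add' X Y := by simpa only [one_smul] using K.phi_linear 1 X Y
  map_smul' f X := by
    have h0 : K.φ 0 = 0 := by simpa using K.phi_linear 1 0 0
    simpa only [add_zero, h0, RingHom.id_apply] using K.phi_linear f X 0

lemma phi_zero : K.φ 0 = 0 := map_zero K.phiEnd

lemma phi_add : K.φ (X + Y) = K.φ X + K.φ Y := map_add K.phiEnd X Y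

lemma phi_sub : K.φ (X - Y) = K.φ X - K.φ Y := map_sub K.phiEnd X Y

lemma phi_neg : K.φ (-X) = -K.φ X := map_neg K.phiEnd X

lemma phi_smul (f : C) : K.φ (f • X) = f • K.φ X := map_smul K.phiEnd f X

lemma nabla_phi : K.nabla X (K.φ Y) =
    K.φ (K.nabla X Y) + K.g (K.φ X) Y • K.ξ - K.η Y • K.φ X := by
  rw [add_sub_assoc, ← K.kenmotsu, add_sub_cancel]

lemma phi_xi_eq_smul_xi : K.φ K.ξ = K.η (K.φ K.ξ) • K.ξ := by
  have h := K.phi_phi (K.φ K.ξ)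
  rwa [K.phi_phi K.ξ, K.eta_xi, one_smul, neg_add_cancel, phi_zero, eq_comm, neg_add_eq_zero] at h

lemma eta_phi_eq_mul_eta : K.η (K.φ X) = K.η (K.φ K.ξ) * K.η X := by
  have h := K.phi_phi (K.φ X)
  rw [K.phi_phi X, phi_add, phi_neg, phi_smul, add_right_inj] at h
  simpa only [eta_smul, K.eta_xi, mul_one, mul_comm (K.η X)] using (congrArg K.η h).symm

lemma eta_phi_xi_mul_self : K.η (K.φ K.ξ) * K.η (K.φ K.ξ) = 0 := by
  have h := K.compat_phi K.ξ K.ξ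
  rw [phi_xi_eq_smul_xi, K.g_smul_left, g_smul_right, g_xi_right, K.eta_xi] at h
  linear_combination h

lemma g_phi_add_g_phi :
    K.g (K.φ X) Y + K.g X (K.φ Y) = 2 * K.η (K.φ K.ξ) * K.η X * K.η Y := by
  have h := K.compat_phi X (K.φ Y)
  rw [K.phi_phi, g_add_right, g_neg_right, g_smul_right, g_xi_right, eta_phi_eq_mul_eta K X,
    eta_phi_eq_mul_eta K Y] at h
  linear_combination -h

lemma derivation_eta : X (K.η Y) = K.η (K.nabla X Y) + K.g Y (K.nabla X K.ξ) := by
  rw [← g_xi_right, ← g_xi_right, K.metric_compat]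

lemma eta_nabla_xi : K.η (K.nabla X K.ξ) = 0 := by
  have h := K.derivation_eta X K.ξ
  rw [K.eta_xi, X.map_one_eq_zero, g_xi_left] at h
  exact two_mul_left_cancel (by linear_combination -h)

lemma derivation_eta_phi_xi : X (K.η (K.φ K.ξ)) = 0 := by
  have h := congrArg K.η (K.kenmotsu X K.ξ)
  rw [phi_xi_eq_smul_xi, K.nabla_leibniz, g_xi_right, K.eta_xi, one_smul] at h
  simpa only [eta_add, eta_sub, eta_smul, K.eta_xi, eta_nabla_xi, mul_one, mul_zero, add_zero,
    sub_self, eta_phi_eq_mul_eta K (K.nabla X K.ξ), sub_zero] using h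

/- The Kenmotsu condition makes `∇_X φ` skew, so differentiating `g_phi_add_g_phi` shows that
`η(φξ) η ⊗ η` is parallel. -/
lemma eta_phi_xi_smul_nabla_xi : K.η (K.φ K.ξ) • K.nabla X K.ξ = 0 := by
  refine K.g_nondeg _ fun Y => ?_
  have h := congrArg X (K.g_phi_add_g_phi Y K.ξ)
  rw [map_add, K.metric_compat, K.metric_compat, K.eta_xi, mul_one, mul_assoc, derivation_two_mul,
    Derivation.leibniz, derivation_eta_phi_xi, smul_zero, add_zero, nabla_phi, nabla_phi,
    derivation_eta] at h
  simp only [eta_add, eta_sub, eta_smul, g_add_right, g_sub_right, g_smul_right,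
    g_xi_right, K.eta_xi, smul_eq_mul] at h
  have hY := K.g_phi_add_g_phi (K.nabla X Y) K.ξ
  have hξ := K.g_phi_add_g_phi Y (K.nabla X K.ξ)
  rw [g_xi_right, K.eta_xi] at hY
  rw [eta_nabla_xi] at hξ
  rw [K.g_smul_left, K.g_symm]
  apply two_mul_left_cancel
  linear_combination -h + hY + hξ - K.g_symm Y (K.φ X)

lemma eta_phi_xi_smul : K.η (K.φ K.ξ) • X = (K.η (K.φ K.ξ) * K.η X) • K.ξ := by
  have hξ : K.nabla X (K.φ K.ξ) = 0 := by
    rw [phi_xi_eq_smul_xi, K.nabla_leibniz, derivation_eta_phi_xi, zero_smul, zero_add,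
      eta_phi_xi_smul_nabla_xi]
  have hφ : K.η (K.φ K.ξ) • K.φ X = 0 := by
    have h := K.nabla_phi X K.ξ
    rw [hξ, K.eta_xi, one_smul, g_xi_right, eta_phi_eq_mul_eta, eq_comm, sub_eq_zero] at h
    rw [← h, smul_add, smul_smul, ← mul_assoc, eta_phi_xi_mul_self, zero_mul, zero_smul,
      ← phi_smul, eta_phi_xi_smul_nabla_xi, phi_zero, add_zero]
  have h := congrArg K.φ hφ
  rw [phi_smul, K.phi_phi, phi_zero, smul_add, smul_neg, smul_smul] at h
  exact neg_add_eq_zero.mp h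

lemma eta_phi_xi [NeZero n] : K.η (K.φ K.ξ) = 0 := by
  have hsum : K.η (K.φ K.ξ) * ∑ i, K.g (K.e i) (K.e i) =
      K.η (K.φ K.ξ) * ∑ i, K.g K.ξ (K.e i) * K.g K.ξ (K.e i) := by
    simp only [Finset.mul_sum]
    refine Finset.sum_congr rfl fun i _ => ?_
    rw [← K.g_smul_left, eta_phi_xi_smul, K.g_smul_left, mul_assoc, K.g_xi_left (K.e i)]
  rw [sum_g_frame_self, sum_g_mul_g_frame, g_xi_left, K.eta_xi] at hsum
  refine natCast_mul_left_cancel (mul_ne_zero two_ne_zero (NeZero.ne n)) ?_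
  push_cast
  linear_combination hsum

end AlmostContact

section Kenmotsu

variable [NeZero n]

lemma phi_xi : K.φ K.ξ = 0 := by rw [phi_xi_eq_smul_xi, eta_phi_xi, zero_smul]

lemma g_phi_skew : K.g (K.φ X) Y = -K.g X (K.φ Y) := by
  linear_combination K.g_phi_add_g_phi X Y + 2 * K.η X * K.η Y * K.eta_phi_xi

lemma nabla_xi : K.nabla X K.ξ = X - K.η X • K.ξ := by
  have h := congrArg K.φ (K.kenmotsu X K.ξ)
  rw [phi_xi, nabla_zero_right, zero_sub, phi_neg, K.phi_phi, eta_nabla_xi, zero_smul, add_zero,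
    neg_neg, phi_sub, phi_smul, phi_smul, phi_xi, K.phi_phi, K.eta_xi, smul_zero] at h
  rw [h]
  module

lemma derivation_eta_eq : X (K.η Y) = K.η (K.nabla X Y) + K.g X Y - K.η X * K.η Y := by
  rw [derivation_eta, nabla_xi, g_sub_right, g_smul_right, g_xi_right, K.g_symm Y]
  ring

lemma Rm_xi_right : K.Rm X Y K.ξ = K.η X • Y - K.η Y • X := by
  simp only [Rm, nabla_xi, nabla_sub_right, K.nabla_leibniz, derivation_eta_eq,
    K.lie_eq_nabla_sub, eta_sub, K.g_symm Y X]
  module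

lemma eta_Rm : K.η (K.Rm X Y Z) = K.η Y * K.g X Z - K.η X * K.g Y Z := by
  rw [← g_xi_right, g_Rm_skew, Rm_xi_right, g_sub_right, g_smul_right, g_smul_right, K.g_symm Z,
    K.g_symm Z]
  ring

lemma Rm_xi_middle : K.Rm X K.ξ Y = K.g X Y • K.ξ - K.η Y • X := by
  refine K.ext_of_g fun Z => ?_
  rw [g_Rm_pair_symm, g_xi_right, eta_Rm, g_sub_left, K.g_smul_left, K.g_smul_left, g_xi_left,
    K.g_symm Y, K.g_symm Z]
  ring

lemma S_xi_right : K.S X K.ξ = -(2 * (n : C)) * K.η X := by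
  simp only [S, Rm_xi_right, g_sub_left, K.g_smul_left, Finset.sum_sub_distrib, ← Finset.mul_sum,
    sum_g_frame_self, ← g_xi_left, sum_g_mul_g_frame]
  rw [K.g_symm X]
  ring

lemma Rm_phi : K.Rm X Y (K.φ Z) = K.φ (K.Rm X Y Z) + K.g (K.φ Y) Z • X - K.g (K.φ X) Z • Y +
    K.g Y Z • K.φ X - K.g X Z • K.φ Y := by
  simp only [Rm, nabla_phi, K.nabla_add_right, nabla_sub_right, K.nabla_leibniz, nabla_xi,
    derivation_eta_eq, K.metric_compat, K.lie_eq_nabla_sub, phi_sub, K.g_add_left,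
    g_sub_left, K.g_smul_left, g_xi_left]
  rw [K.g_symm (K.φ Y) X, ← neg_eq_iff_eq_neg.mpr (K.g_phi_skew X Y)]
  module

lemma nablaRm_xi_middle : K.nablaRm X Y K.ξ Z = K.Rm X Y Z + K.g Y Z • X - K.g X Z • Y := by
  rw [K.Rm_swap X Y]
  simp only [nablaRm, Rm_xi_middle, nabla_xi, Rm_sub_middle, Rm_smul_middle, nabla_sub_right,
    K.nabla_leibniz, K.metric_compat, derivation_eta_eq]
  module

lemma nablaForm_S_xi_middle :
    K.nablaForm K.S X K.ξ Y = -(2 * (n : C)) * K.g X Y - K.S X Y := by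
  have hX : X (K.S K.ξ Y) = -(2 * (n : C)) * X (K.η Y) := by
    rw [S_symm, S_xi_right, neg_mul, map_neg, mul_assoc, derivation_two_mul]
    simp [Derivation.leibniz, mul_assoc]
  rw [nablaForm, hX, nabla_xi, S_sub_left, S_smul_left, K.S_symm K.ξ, K.S_symm K.ξ, S_xi_right,
    S_xi_right, derivation_eta_eq]
  ring

lemma nablaForm_S_xi_left :
    K.nablaForm K.S K.ξ X Y = -2 * K.S X Y - 4 * (n : C) * K.g X Y := by
  have h := K.contracted_second_bianchi K.ξ X Y
  simp only [nablaRm_xi_middle, nablaForm_S_xi_middle, K.g_add_left, g_sub_left, K.g_smul_left,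
    Finset.sum_add_distrib, Finset.sum_sub_distrib, ← Finset.mul_sum, sum_g_frame_self,
    K.g_symm _ Y, sum_g_mul_g_frame] at h
  rw [K.g_symm X Y]
  change K.S X Y + _ - _ = _ at h
  linear_combination h

lemma xi_r : K.ξ K.r = -2 * (K.r + 2 * n * (2 * n + 1)) := by
  rw [← sum_g_nablaQ_frame]
  simp only [g_nablaQ, nablaForm_S_xi_left, Finset.sum_sub_distrib, ← Finset.mul_sum,
    sum_g_frame_self, r]
  ring

lemma trace_phi : ∑ i, K.g (K.φ (K.e i)) (K.e i) = 0 := by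
  have h (i : Fin (2 * n + 1)) : K.g (K.φ (K.e i)) (K.e i) = 0 :=
    two_mul_left_cancel (by
      linear_combination K.g_phi_skew (K.e i) (K.e i) - K.g_symm (K.e i) (K.φ (K.e i)))
  simp only [h, Finset.sum_const_zero]

lemma phi_Rm_phi : K.φ (K.Rm X Y (K.φ Z)) =
    -K.Rm X Y Z + K.g (K.φ Y) Z • K.φ X - K.g (K.φ X) Z • K.φ Y + K.g X Z • Y - K.g Y Z • X := by
  simp only [Rm_phi, phi_add, phi_sub, phi_smul, K.phi_phi, eta_Rm]
  module

lemma sum_g_phi_Rm_phi_frame : ∑ i, K.g (K.φ (K.Rm (K.e i) X (K.φ Y))) (K.e i) =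
    -(K.S X Y + (2 * (n : C) - 1) * K.g X Y + K.η X * K.η Y) := by
  have hself : ∑ i, K.g (K.Rm (K.e i) X Y) (K.e i) = K.S X Y := rfl
  simp only [phi_Rm_phi, g_phi_skew K (K.e _) Y, K.g_add_left, g_sub_left, g_neg_left,
    K.g_smul_left, K.g_symm (K.e _) Y, K.g_symm (K.e _) (K.φ Y), neg_mul,
    Finset.sum_add_distrib, Finset.sum_sub_distrib, Finset.sum_neg_distrib, ← Finset.mul_sum,
    sum_g_mul_g_frame, sum_g_frame_self, trace_phi, hself, K.compat_phi]
  ring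

lemma sum_g_Rm_phi_frame : ∑ i, K.g (K.Rm X Y (K.φ (K.e i))) (K.e i) =
    -2 * ∑ i, K.g (K.φ (K.Rm (K.e i) X Y)) (K.e i) := by
  have hcomm : ∑ i, K.g (K.Rm (K.φ (K.e i)) X Y) (K.e i) =
      ∑ i, K.g (K.φ (K.Rm (K.e i) X Y)) (K.e i) :=
    K.sum_g_comp_comm ((K.curvature.flip X).flip Y) K.phiEnd
  have hbianchi (i : Fin (2 * n + 1)) : K.g (K.Rm X Y (K.φ (K.e i))) (K.e i) =
      -K.g (K.φ (K.Rm (K.e i) X Y)) (K.e i) - K.g (K.Rm (K.φ (K.e i)) X Y) (K.e i) := by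
    have h := congrArg (K.g · (K.e i)) (K.first_bianchi X Y (K.φ (K.e i)))
    simp only [K.g_add_left, g_zero_left] at h
    have hpair : K.g (K.Rm Y (K.φ (K.e i)) X) (K.e i) =
        K.g (K.φ (K.Rm (K.e i) X Y)) (K.e i) := by
      rw [g_Rm_pair_symm, Rm_swap, g_neg_left, g_phi_skew]
    linear_combination h - hpair
  simp only [hbianchi, Finset.sum_sub_distrib, Finset.sum_neg_distrib, hcomm]
  ring

lemma Sstar_eq : K.Sstar X Y = K.S X Y + (2 * (n : C) - 1) * K.g X Y + K.η X * K.η Y := by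
  have htwo : (2 : ℝ)⁻¹ • (2 : C) = 1 := by
    rw [← map_ofNat (algebraMap ℝ C) 2, Algebra.algebraMap_eq_smul_one, smul_smul,
      inv_mul_cancel₀ two_ne_zero, one_smul]
  rw [Sstar, sum_g_Rm_phi_frame, sum_g_phi_Rm_phi_frame, neg_mul_neg, ← smul_mul_assoc, htwo,
    one_mul]

end Kenmotsu

section LieDerivative

/-- The Lie derivative `(£_V ∇)(X, Y)` of the Levi-Civita connection. -/
def lieNabla (V X Y : Derivation ℝ C C) : Derivation ℝ C C :=
  ⁅V, K.nabla X Y⁆ - K.nabla ⁅V, X⁆ Y - K.nabla X ⁅V, Y⁆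

/-- The covariant derivative `(∇_X T)(Y, Z)` of a field `T` of vector-valued bilinear maps. -/
def nablaTensor (T : Derivation ℝ C C → Derivation ℝ C C → Derivation ℝ C C)
    (X Y Z : Derivation ℝ C C) : Derivation ℝ C C :=
  K.nabla X (T Y Z) - T (K.nabla X Y) Z - T Y (K.nabla X Z)

lemma lieNabla_symm : K.lieNabla V X Y = K.lieNabla V Y X := by
  have hX := K.torsion_free ⁅V, X⁆ Y
  have hY := K.torsion_free X ⁅V, Y⁆
  have hXY : ⁅V, K.nabla X Y⁆ - ⁅V, K.nabla Y X⁆ = ⁅⁅V, X⁆, Y⁆ + ⁅X, ⁅V, Y⁆⁆ := by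
    rw [← lie_sub, K.torsion_free, leibniz_lie]
  rw [← sub_eq_zero]
  calc K.lieNabla V X Y - K.lieNabla V Y X
      = ⁅V, K.nabla X Y⁆ - ⁅V, K.nabla Y X⁆ - (K.nabla ⁅V, X⁆ Y - K.nabla Y ⁅V, X⁆)
        - (K.nabla X ⁅V, Y⁆ - K.nabla ⁅V, Y⁆ X) := by
        simp only [lieNabla]; abel
    _ = 0 := by rw [hX, hY, hXY]; abel

lemma lieNabla_sub_right : K.lieNabla V X (Y - Z) = K.lieNabla V X Y - K.lieNabla V X Z := by
  simp only [lieNabla, nabla_sub_right, lie_sub]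
  abel

lemma lieNabla_smul_right (f : C) : K.lieNabla V X (f • Y) = f • K.lieNabla V X Y := by
  simp only [lieNabla, K.nabla_leibniz, LieRinehartRing.leibniz_smul_right, lie_add,
    K.nabla_add_right, Derivation.bracket_eq_fun, Derivation.commutator_apply]
  module

lemma nablaForm_lieG : K.nablaForm (K.lieG V) X Y Z =
    K.g (K.lieNabla V X Y) Z + K.g Y (K.lieNabla V X Z) := by
  have hess := congrArg V (K.metric_compat X Y Z)
  have hVX := K.metric_compat ⁅V, X⁆ Y Z
  have hVY := K.metric_compat X ⁅V, Y⁆ Z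
  have hVZ := K.metric_compat X Y ⁅V, Z⁆
  rw [map_add] at hess
  rw [Derivation.commutator_apply] at hVX
  simp only [nablaForm, lieG, lieNabla, map_sub, g_sub_left, g_sub_right]
  linear_combination hess - hVX - hVY - hVZ

lemma two_mul_g_lieNabla : 2 * K.g (K.lieNabla V X Y) Z =
    K.nablaForm (K.lieG V) X Y Z + K.nablaForm (K.lieG V) Y X Z - K.nablaForm (K.lieG V) Z X Y := by
  simp only [nablaForm_lieG, K.lieNabla_symm V Y X, K.lieNabla_symm V Z]
  simp only [K.g_symm X, K.g_symm Y]
  ring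

lemma lieRm_eq_nablaTensor_sub : K.lieRm V X Y Z =
    K.nablaTensor (K.lieNabla V) X Y Z - K.nablaTensor (K.lieNabla V) Y X Z := by
  have hlie : K.nabla ⁅V, ⁅X, Y⁆⁆ Z = K.nabla ⁅⁅V, X⁆, Y⁆ Z + K.nabla ⁅X, ⁅V, Y⁆⁆ Z := by
    rw [leibniz_lie, K.nabla_add_left]
  have htorsion : K.lieNabla V (K.nabla X Y) Z - K.lieNabla V (K.nabla Y X) Z =
      K.lieNabla V ⁅X, Y⁆ Z := by
    rw [K.lieNabla_symm V _ Z, K.lieNabla_symm V _ Z, ← lieNabla_sub_right, K.torsion_free,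
      lieNabla_symm]
  calc K.lieRm V X Y Z
      = K.nabla X (K.lieNabla V Y Z) - K.nabla Y (K.lieNabla V X Z) - K.lieNabla V ⁅X, Y⁆ Z
        - K.lieNabla V Y (K.nabla X Z) + K.lieNabla V X (K.nabla Y Z) := by
        simp only [lieRm, Rm, lieNabla, lie_sub, nabla_sub_right, hlie]
        abel
    _ = K.nablaTensor (K.lieNabla V) X Y Z - K.nablaTensor (K.lieNabla V) Y X Z := by
        rw [← htorsion]
        simp only [nablaTensor]
        abel

end LieDerivative

section StarRicciSoliton

variable [NeZero n] {K V} {l : ℝ}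

lemma IsStarRicciSoliton.lieG_eq (h : K.IsStarRicciSoliton V l) :
    K.lieG V X Y = -2 * K.S X Y - (2 * (2 * (n : C) - 1) + algebraMap ℝ C (2 * l)) * K.g X Y -
      2 * (K.η X * K.η Y) := by
  have hXY := h X Y
  rw [Sstar_eq, Algebra.smul_def] at hXY
  linear_combination hXY

lemma IsStarRicciSoliton.nablaForm_lieG_eq (h : K.IsStarRicciSoliton V l) :
    K.nablaForm (K.lieG V) X Y Z = -2 * K.nablaForm K.S X Y Z -
      2 * ((K.g X Y - K.η X * K.η Y) * K.η Z + K.η Y * (K.g X Z - K.η X * K.η Z)) := by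
  have htwo : X (2 : C) = 0 := by simpa using X.map_natCast 2
  have hconst : X (2 * (2 * (n : C) - 1) + algebraMap ℝ C (2 * l)) = 0 := by
    rw [map_add, X.map_algebraMap, derivation_two_mul, map_sub, derivation_two_mul]
    simp
  simp only [nablaForm, h.lieG_eq, map_sub, Derivation.leibniz, neg_mul, map_neg,
    htwo, K.metric_compat, hconst, derivation_eta_eq, smul_eq_mul]
  ring

lemma IsStarRicciSoliton.lieNabla_xi (h : K.IsStarRicciSoliton V l) :
    K.lieNabla V X K.ξ = (2 : C) • K.Q X + (4 * (n : C)) • X := by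
  refine K.ext_of_g fun Z => two_mul_left_cancel ?_
  rw [two_mul_g_lieNabla]
  simp only [h.nablaForm_lieG_eq, K.nablaForm_S_symm Z X, nablaForm_S_xi_middle,
    nablaForm_S_xi_left, K.g_add_left, K.g_smul_left, g_Q, g_xi_left, g_xi_right, K.eta_xi,
    K.g_symm Z, K.S_symm Z]
  ring

lemma IsStarRicciSoliton.nablaTensor_lieNabla_xi (h : K.IsStarRicciSoliton V l) :
    K.nablaTensor (K.lieNabla V) X Y K.ξ = (2 : C) • K.nablaQ X Y - K.lieNabla V Y X +
      K.η X • ((2 : C) • K.Q Y + (4 * (n : C)) • Y) := by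
  have htwo : X (2 : C) = 0 := by simpa using X.map_natCast 2
  have hfour : X (4 * (n : C)) = 0 := by simpa using X.map_natCast (4 * n)
  simp only [nablaTensor, nabla_xi, lieNabla_sub_right, lieNabla_smul_right, h.lieNabla_xi,
    K.nabla_add_right, K.nabla_leibniz, htwo, hfour, nablaQ]
  module

lemma IsStarRicciSoliton.lieRm_xi (h : K.IsStarRicciSoliton V l) :
    K.lieRm V X Y K.ξ = (2 : C) • (K.nablaQ X Y - K.nablaQ Y X) +
      K.η X • ((2 : C) • K.Q Y + (4 * (n : C)) • Y) -
      K.η Y • ((2 : C) • K.Q X + (4 * (n : C)) • X) := by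
  rw [lieRm_eq_nablaTensor_sub, h.nablaTensor_lieNabla_xi, h.nablaTensor_lieNabla_xi,
    K.lieNabla_symm V Y X]
  module

lemma IsStarRicciSoliton.lieS_xi (h : K.IsStarRicciSoliton V l) :
    K.lieS V X K.ξ = -(X K.r) + K.ξ K.r * K.η X := by
  have hdiv : 2 * ∑ i, K.g (K.nablaQ (K.e i) X) (K.e i) = X K.r := by
    simp only [g_nablaQ, derivation_r_eq_two_mul_div]
  have hQ : ∑ i, K.η (K.e i) * K.g (K.Q X) (K.e i) = -(2 * (n : C)) * K.η X := by
    simp only [← g_xi_left, sum_g_mul_g_frame]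
    rw [g_Q, S_xi_right, g_xi_left]
  have hη : ∑ i, K.η (K.e i) * K.g X (K.e i) = K.η X := by
    simp only [← g_xi_left, sum_g_mul_g_frame]
    rw [K.g_symm]
  calc K.lieS V X K.ξ
      = ∑ i, (2 * (K.g (K.nablaQ (K.e i) X) (K.e i) - K.g (K.nablaQ X (K.e i)) (K.e i)) +
          (2 * (K.η (K.e i) * K.g (K.Q X) (K.e i)) + 4 * n * (K.η (K.e i) * K.g X (K.e i))) -
          K.η X * (2 * K.g (K.Q (K.e i)) (K.e i) + 4 * n * K.g (K.e i) (K.e i))) := by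
        simp only [← sum_g_lieRm_frame, h.lieRm_xi, g_sub_left, K.g_add_left, K.g_smul_left,
          mul_add, mul_left_comm]
    _ = X K.r - 2 * X K.r + (2 * (-(2 * (n : C)) * K.η X) + 4 * n * K.η X) -
          K.η X * (2 * K.r + 4 * n * (2 * n + 1)) := by
        simp only [Finset.sum_sub_distrib, Finset.sum_add_distrib, ← Finset.mul_sum, mul_sub, hdiv,
          hQ, hη, sum_g_nablaQ_frame, ← r_eq_sum_g_Q, sum_g_frame_self]
    _ = -(X K.r) + K.ξ K.r * K.η X := by
        rw [xi_r]
        ring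

end StarRicciSoliton

end KenmotsuManifold

open KenmotsuManifold in
/-- If a Kenmotsu manifold of dimension `2n+1` admits a `*`-Ricci
soliton with potential vector field `V`, then
`(£_V S)(X, ξ) = -X(r) + ξ(r) η(X)` for all vector fields `X`. -/
theorem stmt4 {n : ℕ} {C : Type*} [CommRing C] [Algebra ℝ C]
    (K : KenmotsuManifold n C) (V : Derivation ℝ C C) (l : ℝ)
    (h : K.IsStarRicciSoliton V l) (X : Derivation ℝ C C) :
    K.lieS V X K.ξ = -(X K.r) + K.ξ K.r * K.η X := by
  rcases eq_or_ne n 0 with rfl | hn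
  · simp [lieS, r, S_eq_zero_of_dim_one]
  · have : NeZero n := ⟨hn⟩
    exact h.lieS_xi X
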